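/- Fix Ω₀ > 0 and set Ω(ε) = Ω₀/ε. There exist a constant C = C(Ω₀) and ε₀ > 0 such that for all 0 < ε < ε₀ the GP ground-state energy satisfies E^TF ≤ ε² · E^GP_{ε,Ω(ε)} ≤ E^TF + C ε|log ε|, where E^TF is the Thomas–Fermi ground-state energy associated with Ω₀. In particular ε² E^GP_{ε,Ω₀/ε} = E^TF + O(ε|log ε|) as ε → 0. -/

import Mathlib

open MeasureTheory Real Filter

noncomputable section

/-- Points of the plane. -/
abbrev Pt : Type := EuclideanSpace ℝ (Fin 2)

/-- The open unit disc. -/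
def B1 : Set Pt := Metric.ball 0 1

/-- First partial derivative of a complex-valued function. -/
def pd1 (Ψ : Pt → ℂ) (x : Pt) : ℂ := fderiv ℝ Ψ x (EuclideanSpace.single 0 1)

/-- Second partial derivative of a complex-valued function. -/
def pd2 (Ψ : Pt → ℂ) (x : Pt) : ℂ := fderiv ℝ Ψ x (EuclideanSpace.single 1 1)

/-- Angular momentum operator `L = -i (x₁ ∂₂ - x₂ ∂₁)`. -/
def angMom (Ψ : Pt → ℂ) (x : Pt) : ℂ :=
  -Complex.I * ((x 0 : ℂ) * pd2 Ψ x - (x 1 : ℂ) * pd1 Ψ x)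

/-- The Gross-Pitaevskii energy density `|∇Ψ|² - Ω conj(Ψ) LΨ + |Ψ|⁴/ε²`. -/
def gpDensity (ε Ω : ℝ) (Ψ : Pt → ℂ) (x : Pt) : ℝ :=
  ‖pd1 Ψ x‖ ^ 2 + ‖pd2 Ψ x‖ ^ 2
    - Ω * (starRingEnd ℂ (Ψ x) * angMom Ψ x).re
    + ‖Ψ x‖ ^ 4 / ε ^ 2

/-- The Gross-Pitaevskii functional on the unit disc. -/
def gpEnergy (ε Ω : ℝ) (Ψ : Pt → ℂ) : ℝ := ∫ x in B1, gpDensity ε Ω Ψ x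

/-- Admissible (H¹, normalized) wave functions. -/
def gpAdm (Ψ : Pt → ℂ) : Prop :=
  DifferentiableOn ℝ Ψ B1 ∧
  IntegrableOn (fun x => ‖Ψ x‖ ^ 2) B1 ∧
  IntegrableOn (fun x => ‖pd1 Ψ x‖ ^ 2 + ‖pd2 Ψ x‖ ^ 2) B1 ∧
  IntegrableOn (fun x => ‖Ψ x‖ ^ 4) B1 ∧
  IntegrableOn (fun x => (starRingEnd ℂ (Ψ x) * angMom Ψ x).re) B1 ∧
  (∫ x in B1, ‖Ψ x‖ ^ 2) = 1

/-- The GP ground-state energy: infimum of the functional over normalized functions. -/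
def gpGround (ε Ω : ℝ) : ℝ := sInf {E | ∃ Ψ : Pt → ℂ, gpAdm Ψ ∧ E = gpEnergy ε Ω Ψ}

/-- A GP minimizer: a normalized admissible function attaining the infimum. -/
def IsGPMinimizer (ε Ω : ℝ) (Ψ : Pt → ℂ) : Prop :=
  gpAdm Ψ ∧ gpEnergy ε Ω Ψ = gpGround ε Ω

/-- The Thomas-Fermi functional. -/
def tfEnergy (Ω₀ : ℝ) (ρ : Pt → ℝ) : ℝ :=
  ∫ x in B1, ((ρ x) ^ 2 - Ω₀ ^ 2 * ‖x‖ ^ 2 * ρ x / 4)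

/-- Admissible TF densities: nonnegative, in L²(B₁), of total mass one. -/
def tfAdm (ρ : Pt → ℝ) : Prop :=
  IntegrableOn ρ B1 ∧ IntegrableOn (fun x => (ρ x) ^ 2) B1 ∧
  (∀ᵐ x ∂(volume.restrict B1), 0 ≤ ρ x) ∧ (∫ x in B1, ρ x) = 1

/-- The TF ground-state energy. -/
def tfGround (Ω₀ : ℝ) : ℝ := sInf {E | ∃ ρ : Pt → ℝ, tfAdm ρ ∧ E = tfEnergy Ω₀ ρ}

/-- Radius of the TF "hole". -/
def R0 (Ω₀ : ℝ) : ℝ := Real.sqrt (1 - 4 / (Real.sqrt π * Ω₀))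

/-- The TF minimizer. -/
def rhoTF (Ω₀ : ℝ) (x : Pt) : ℝ :=
  if Ω₀ ≤ 4 / Real.sqrt π then 1 / π - Ω₀ ^ 2 / 16 * (1 - 2 * ‖x‖ ^ 2)
  else max 0 (Ω₀ ^ 2 / 8 * (‖x‖ ^ 2 - 1) + Ω₀ / (2 * Real.sqrt π))

lemma gpDensity_eq (ε Ω : ℝ) (Ψ : Pt → ℂ) (x : Pt) :
    gpDensity ε Ω Ψ x = ‖pd1 Ψ x + Complex.I * ((Ω * x 1 / 2 : ℝ) : ℂ) * Ψ x‖ ^ 2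
      + ‖pd2 Ψ x - Complex.I * ((Ω * x 0 / 2 : ℝ) : ℂ) * Ψ x‖ ^ 2
      - Ω ^ 2 * ‖x‖ ^ 2 / 4 * ‖Ψ x‖ ^ 2 + ‖Ψ x‖ ^ 4 / ε ^ 2 := by
  unfold gpDensity angMom
  rw [EuclideanSpace.real_norm_sq_eq x, Fin.sum_univ_two]
  generalize pd1 Ψ x = a
  generalize pd2 Ψ x = b
  generalize Ψ x = z
  simp only [← Complex.normSq_eq_norm_sq, Complex.normSq_apply]
  simp
  ring

lemma vol_B1 : volume B1 = ENNReal.ofReal π := by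
  unfold B1
  rw [EuclideanSpace.volume_ball_fin_two]; simp
  

lemma vol_B1_real : (volume.restrict B1).real Set.univ = π := by
  simp [Measure.real, vol_B1, Real.pi_pos.le]

instance : IsFiniteMeasure (volume.restrict B1) := ⟨by simp [vol_B1]⟩

lemma norm_sq_lt_one {x : Pt} (hx : x ∈ B1) : ‖x‖ ^ 2 < 1 := by
  have : ‖x‖ < 1 := by simpa [B1] using hx
  nlinarith [norm_nonneg x]

lemma measB1 : MeasurableSet B1 := Metric.isOpen_ball.measurableSet

lemma integrableOn_of_cont {f : Pt → ℝ} (hf : Continuous f) : IntegrableOn f B1 :=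
  ((hf.continuousOn (s := Metric.closedBall (0 : Pt) 1)).integrableOn_compact
    (isCompact_closedBall _ _)).mono_set Metric.ball_subset_closedBall

lemma tf_integrable {Ω₀ : ℝ} {ρ : Pt → ℝ} (h : tfAdm ρ) :
    IntegrableOn (fun x => Ω₀ ^ 2 * ‖x‖ ^ 2 * ρ x / 4) B1 := by
  have : IntegrableOn (fun x => (Ω₀ ^ 2 * ‖x‖ ^ 2 / 4) * ρ x) B1 := by
    refine Integrable.bdd_mul (c := Ω₀ ^ 2 / 4) h.1 (by fun_prop) ?_
    filter_upwards [ae_restrict_mem measB1] with x hx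
    have := norm_sq_lt_one hx
    rw [Real.norm_of_nonneg (by positivity)]
    nlinarith [sq_nonneg Ω₀]
  refine this.congr (ae_of_all _ fun x => ?_)
  simp only; ring

lemma tf_bddBelow (Ω₀ : ℝ) : BddBelow {E | ∃ ρ : Pt → ℝ, tfAdm ρ ∧ E = tfEnergy Ω₀ ρ} := by
  refine ⟨∫ x in B1, -(Ω₀ ^ 2 * ‖x‖ ^ 2 / 8) ^ 2, ?_⟩
  rintro E ⟨ρ, h, rfl⟩
  unfold tfEnergy
  refine integral_mono (integrableOn_of_cont (by fun_prop)) (h.2.1.sub (tf_integrable h)) fun x => ?_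
  simp only
  nlinarith [sq_nonneg (ρ x - Ω₀ ^ 2 * ‖x‖ ^ 2 / 8)]

lemma gp_ge_tf {ε Ω₀ : ℝ} (hε : 0 < ε) {Ψ : Pt → ℂ} (h : gpAdm Ψ) :
    tfGround Ω₀ ≤ ε ^ 2 * gpEnergy ε (Ω₀ / ε) Ψ := by
  obtain ⟨h1, h2, h3, h4, h5, h6⟩ := h
  have hadm : tfAdm (fun x => ‖Ψ x‖ ^ 2) := by
    refine ⟨h2, ?_, ae_of_all _ fun x => by positivity, h6⟩
    refine h4.congr (ae_of_all _ fun x => ?_)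
    simp only; ring
  refine (csInf_le (tf_bddBelow Ω₀) ⟨_, hadm, rfl⟩).trans ?_
  unfold tfEnergy gpEnergy
  rw [← integral_const_mul]
  refine integral_mono (hadm.2.1.sub (tf_integrable hadm)) ?_ fun x => ?_
  · refine Integrable.const_mul ?_ _
    exact (h3.sub (h5.const_mul _)).add (h4.div_const _)
  · simp only [gpDensity_eq]
    have e1 : ε ^ 2 * (Ω₀ / ε) ^ 2 = Ω₀ ^ 2 := by field_simp
    have e2 : ε ^ 2 * (‖Ψ x‖ ^ 4 / ε ^ 2) = ‖Ψ x‖ ^ 4 := by field_simp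
    generalize ‖pd1 Ψ x + _‖ = a
    generalize ‖pd2 Ψ x - _‖ = b
    have : 0 ≤ ε ^ 2 * a ^ 2 := by positivity
    have : 0 ≤ ε ^ 2 * b ^ 2 := by positivity
    linear_combination this + ‹0 ≤ ε ^ 2 * a ^ 2› - e2 + e1 * (‖x‖ ^ 2 / 4 * ‖Ψ x‖ ^ 2)

/-- Averaging a nonnegative 1-periodic function. -/
lemma periodic_bound {f : ℝ → ℝ} (hf : Continuous f) (h0 : ∀ x, 0 ≤ f x)
    (hp : Function.Periodic f 1) {ℓ : ℝ} (hl : 0 < ℓ) (hl1 : ℓ ≤ 1) :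
    ∫ x in (-1 : ℝ)..1, f (x / ℓ) ≤ 4 * ∫ x in (0 : ℝ)..1, f x := by
  have hi : ∀ a b, IntervalIntegrable f volume a b := fun a b => hf.intervalIntegrable a b
  rw [intervalIntegral.integral_comp_div _ hl.ne', smul_eq_mul]
  obtain ⟨K, hK1, hK2⟩ : ∃ K : ℕ, 1 / ℓ ≤ K ∧ (K : ℝ) < 1 / ℓ + 1 :=
    ⟨⌈1 / ℓ⌉₊, Nat.le_ceil _, Nat.ceil_lt_add_one (by positivity)⟩
  have h1 : ∫ x in (-1 / ℓ)..(1 / ℓ), f x ≤ ∫ x in (-(K : ℝ))..K, f x := by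
    have hpos : 0 < 1 / ℓ := by positivity
    apply intervalIntegral.integral_mono_interval
    · rw [neg_div]; linarith
    · rw [neg_div]; linarith
    · exact hK1
    · exact ae_of_all _ h0
    · exact hi _ _
  have h2 : ∫ x in (-(K : ℝ))..K, f x = (2 * K) * ∫ x in (0 : ℝ)..1, f x := by
    have := hp.intervalIntegral_add_zsmul_eq (2 * K : ℤ) (-(K : ℝ)) (fun a b => hi a b)
    rw [hp.intervalIntegral_add_eq (-(K : ℝ)) 0] at this
    simp only [zsmul_eq_mul] at this
    push_cast at this
    rw [zero_add] at this
    rw [← this]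
    congr 1; ring
  have h3 : 0 ≤ ∫ x in (0 : ℝ)..1, f x :=
    intervalIntegral.integral_nonneg (by norm_num) (fun x _ => h0 x)
  have h4 : ℓ * (2 * K) ≤ 4 := by
    have : ℓ * (1 / ℓ) = 1 := by field_simp
    nlinarith
  calc _ ≤ ℓ * ((2 * K) * ∫ x in (0 : ℝ)..1, f x) := by
        rw [← h2]; exact mul_le_mul_of_nonneg_left h1 hl.le
    _ = (ℓ * (2 * K)) * ∫ x in (0 : ℝ)..1, f x := by ring
    _ ≤ _ := mul_le_mul_of_nonneg_right h4 h3

lemma fold_integral {h : ℝ → ℝ} (hc : ContinuousOn h (Set.Icc 0 1)) :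
    ∫ x in (0 : ℝ)..1, h |1 - 2 * x| = ∫ u in (0 : ℝ)..1, h u := by
  have hc' : ContinuousOn (fun x : ℝ => h |1 - 2 * x|) (Set.Icc 0 1) := by
    apply hc.comp (by fun_prop)
    intro x hx
    exact ⟨abs_nonneg _, abs_le.2 ⟨by linarith [hx.2], by linarith [hx.1]⟩⟩
  rw [← intervalIntegral.integral_add_adjacent_intervals (b := (1 / 2 : ℝ))]
  · have e1 : ∫ x in (0 : ℝ)..(1 / 2), h |1 - 2 * x| = ∫ x in (0 : ℝ)..(1 / 2), h (1 - 2 * x) := by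
      apply intervalIntegral.integral_congr
      intro x hx
      rw [Set.uIcc_of_le (by norm_num)] at hx
      simp only
      rw [abs_of_nonneg (by linarith [hx.2])]
    have e2 : ∫ x in (1 / 2 : ℝ)..1, h |1 - 2 * x| = ∫ x in (1 / 2 : ℝ)..1, h (2 * x - 1) := by
      apply intervalIntegral.integral_congr
      intro x hx
      rw [Set.uIcc_of_le (by norm_num)] at hx
      simp only
      rw [abs_of_nonpos (by linarith [hx.1])]
      congr 1; ring
    rw [e1, e2, intervalIntegral.integral_comp_sub_mul _ two_ne_zero,
      intervalIntegral.integral_comp_mul_sub _ two_ne_zero]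
    norm_num
    ring
  · refine (hc'.mono ?_).intervalIntegrable
    rw [Set.uIcc_of_le (by norm_num)]; exact Set.Icc_subset_Icc le_rfl (by norm_num)
  · refine (hc'.mono ?_).intervalIntegrable
    rw [Set.uIcc_of_le (by norm_num)]; exact Set.Icc_subset_Icc (by norm_num) le_rfl

lemma abs_cos_ge {x : ℝ} (h0 : 0 ≤ x) (h1 : x ≤ 1) : |1 - 2 * x| ≤ |cos (π * x)| := by
  have key : ∀ y : ℝ, 0 ≤ y → y ≤ 1 / 2 → 1 - 2 * y ≤ cos (π * y) := by
    intro y hy0 hy1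
    have := Real.one_sub_mul_le_cos (x := π * y) (by positivity) (by nlinarith [pi_pos])
    have e : 2 / π * (π * y) = 2 * y := by field_simp
    linarith
  rcases le_total x (1 / 2) with h | h
  · rw [abs_of_nonneg (by linarith)]
    exact (key x h0 h).trans (le_abs_self _)
  · rw [abs_of_nonpos (by linarith)]
    have := key (1 - x) (by linarith) (by linarith)
    have e : cos (π * (1 - x)) = - cos (π * x) := by rw [mul_sub, mul_one, cos_pi_sub]
    rw [e] at this
    have := neg_le_abs (cos (π * x))
    linarith

/-- squared modulus of the lattice function -/
def gg (X Y : ℝ) : ℝ := 1 - sin (π * X) ^ 2 * sin (π * Y) ^ 2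

lemma gg_nonneg (X Y : ℝ) : 0 ≤ gg X Y := by
  unfold gg
  nlinarith [sin_sq_le_one (π * X), sin_sq_le_one (π * Y), sq_nonneg (sin (π * X)),
    sq_nonneg (sin (π * Y))]

lemma gg_ge (X Y : ℝ) : (cos (π * X) ^ 2 + cos (π * Y) ^ 2) / 2 ≤ gg X Y := by
  unfold gg
  rw [sin_sq, sin_sq]
  nlinarith [cos_sq_le_one (π * X), cos_sq_le_one (π * Y), sq_nonneg (cos (π * X)),
    sq_nonneg (cos (π * Y))]

lemma inner_bound {ε : ℝ} (hε : 0 < ε) (Y : ℝ) :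
    ∫ X in (0 : ℝ)..1, 1 / (gg X Y + ε) ≤ 8 / (|cos (π * Y)| + √ε) := by
  have hs : 0 < √ε := sqrt_pos.2 hε
  have hs2 : √ε ^ 2 = ε := sq_sqrt hε.le
  set c := (|cos (π * Y)| + √ε) / 2 with hc
  have hc0 : 0 < c := by positivity
  have hcont : ContinuousOn (fun u : ℝ => 4 / (u + c) ^ 2) (Set.Icc 0 1) := by
    apply ContinuousOn.div (by fun_prop) (by fun_prop)
    intro x hx
    have := hx.1
    positivity
  calc _ ≤ ∫ X in (0 : ℝ)..1, 4 / (|1 - 2 * X| + c) ^ 2 := by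
        apply intervalIntegral.integral_mono_on (by norm_num)
        · apply Continuous.intervalIntegrable
          unfold gg
          apply Continuous.div (by fun_prop) (by fun_prop)
          intro x
          have := gg_nonneg x Y
          unfold gg at this
          positivity
        · apply Continuous.intervalIntegrable
          apply Continuous.div (by fun_prop) (by fun_prop)
          intro x; positivity
        · intro X hX
          rw [div_le_div_iff₀ (by have := gg_nonneg X Y; positivity) (by positivity)]
          have h1 := abs_cos_ge hX.1 hX.2
          have h2 := gg_ge X Y
          rw [← sq_abs (cos (π * X)), ← sq_abs (cos (π * Y))] at h2
          have h3 : (|1 - 2 * X| + c) ^ 2 ≤ (|cos (π * X)| + c) ^ 2 := by gcongr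
          nlinarith [sq_nonneg (|cos (π * X)| - c), sq_nonneg (|cos (π * Y)| - √ε)]
    _ = ∫ u in (0 : ℝ)..1, 4 / (u + c) ^ 2 := fold_integral (h := fun u => 4 / (u + c) ^ 2) hcont
    _ = (-4 / (1 + c)) - (-4 / (0 + c)) := by
        apply intervalIntegral.integral_eq_sub_of_hasDerivAt (f := fun u => -4 / (u + c))
        · intro x hx
          rw [Set.uIcc_of_le (by norm_num)] at hx
          have hx0 : x + c ≠ 0 := by have := hx.1; positivity
          have := (((hasDerivAt_id x).add_const c).inv hx0).const_mul (-4)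
          refine (this.congr_of_eventuallyEq (Eventually.of_forall fun u => ?_)).congr_deriv ?_
          · simp [div_eq_mul_inv]
          · simp only [id]; ring
        · apply ContinuousOn.intervalIntegrable
          rw [Set.uIcc_of_le (by norm_num)]; exact hcont
    _ ≤ 4 / c := by
        have : 0 ≤ 4 / (1 + c) := by positivity
        rw [neg_div, neg_div, zero_add]; linarith
    _ = _ := by rw [hc]; field_simp; norm_num

lemma log_bound {ε : ℝ} (hε : 0 < ε) (h4 : ε ≤ 1 / 4) :
    log (1 + √ε) - log (√ε) ≤ |log ε| := by
  have h1 : log ε ≤ -(2 * log 2) := by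
    have := log_le_log hε h4
    have e : log (1 / 4 : ℝ) = -(2 * log 2) := by
      rw [one_div, log_inv, show (4 : ℝ) = 2 ^ 2 by norm_num, log_pow]; norm_num
    linarith
  have h2 : log (√ε) = log ε / 2 := log_sqrt hε.le
  have h3 : log (1 + √ε) ≤ log 2 := by
    apply log_le_log (by positivity)
    have : √ε ≤ 1 := by rw [Real.sqrt_le_one]; linarith
    linarith
  have : -log ε ≤ |log ε| := neg_le_abs _
  have := log_pos one_lt_two
  linarith

lemma outer_bound {ε : ℝ} (hε : 0 < ε) (h4 : ε ≤ 1 / 4) :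
    ∫ Y in (0 : ℝ)..1, 32 / (|cos (π * Y)| + √ε) ≤ 32 * |log ε| := by
  have hs : 0 < √ε := sqrt_pos.2 hε
  have hcont : ContinuousOn (fun u : ℝ => 32 / (u + √ε)) (Set.Icc 0 1) := by
    apply ContinuousOn.div (by fun_prop) (by fun_prop)
    intro x hx
    have := hx.1
    positivity
  calc _ ≤ ∫ X in (0 : ℝ)..1, 32 / (|1 - 2 * X| + √ε) := by
        apply intervalIntegral.integral_mono_on (by norm_num)
        · apply Continuous.intervalIntegrable
          apply Continuous.div (by fun_prop) (by fun_prop)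
          intro x; positivity
        · apply Continuous.intervalIntegrable
          apply Continuous.div (by fun_prop) (by fun_prop)
          intro x; positivity
        · intro X hX
          have := abs_cos_ge hX.1 hX.2
          gcongr
    _ = ∫ u in (0 : ℝ)..1, 32 / (u + √ε) := fold_integral (h := fun u => 32 / (u + √ε)) hcont
    _ = 32 * log (1 + √ε) - 32 * log (0 + √ε) := by
        apply intervalIntegral.integral_eq_sub_of_hasDerivAt (f := fun u => 32 * log (u + √ε))
        · intro x hx
          rw [Set.uIcc_of_le (by norm_num)] at hx
          have hx0 : x + √ε ≠ 0 := by have := hx.1; positivity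
          have := (((hasDerivAt_id x).add_const (√ε)).log hx0).const_mul 32
          refine this.congr_deriv ?_
          simp only [id]; ring
        · apply ContinuousOn.intervalIntegrable
          rw [Set.uIcc_of_le (by norm_num)]; exact hcont
    _ ≤ _ := by
        have := log_bound hε h4
        rw [zero_add]; linarith

lemma gg_periodic_left (Y : ℝ) : Function.Periodic (fun X => gg X Y) 1 := by
  intro X; simp only [gg, mul_add, mul_one, sin_add_pi, neg_sq]

lemma gg_cont : Continuous (fun p : ℝ × ℝ => gg p.1 p.2) := by unfold gg; fun_prop

lemma square_bound {ε ℓ : ℝ} (hε : 0 < ε) (h4 : ε ≤ 1 / 4) (hl : 0 < ℓ) (hl1 : ℓ ≤ 1) :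
    ∫ y in (-1 : ℝ)..1, ∫ x in (-1 : ℝ)..1, 1 / (gg (x / ℓ) (y / ℓ) + ε) ≤ 128 * |log ε| := by
  have hs : 0 < √ε := sqrt_pos.2 hε
  have hne : ∀ a b, gg a b + ε ≠ 0 := fun a b => by have := gg_nonneg a b; positivity
  have hc2 : Continuous fun y : ℝ => 32 / (|cos (π * y)| + √ε) := by
    apply Continuous.div (by fun_prop) (by fun_prop)
    intro x; positivity
  have h1 : ∀ y : ℝ, ∫ x in (-1 : ℝ)..1, 1 / (gg (x / ℓ) (y / ℓ) + ε)
      ≤ 32 / (|cos (π * (y / ℓ))| + √ε) := by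
    intro y
    refine (periodic_bound (f := fun X => 1 / (gg X (y / ℓ) + ε)) ?_ ?_ ?_ hl hl1).trans ?_
    · apply Continuous.div (by fun_prop) (by unfold gg; fun_prop)
      intro x; exact hne _ _
    · intro x; have := gg_nonneg x (y / ℓ); positivity
    · intro X; simp only [gg_periodic_left (y / ℓ) X]
    · have := inner_bound hε (y / ℓ)
      calc _ ≤ 4 * (8 / (|cos (π * (y / ℓ))| + √ε)) := by linarith
        _ = _ := by ring
  calc _ ≤ ∫ y in (-1 : ℝ)..1, 32 / (|cos (π * (y / ℓ))| + √ε) := by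
        apply intervalIntegral.integral_mono_on (by norm_num)
        · apply Continuous.intervalIntegrable
          apply intervalIntegral.continuous_parametric_intervalIntegral_of_continuous'
          simp only [Function.uncurry_def]
          apply Continuous.div (by fun_prop) (by unfold gg; fun_prop)
          intro x; exact hne _ _
        · apply Continuous.intervalIntegrable
          exact hc2.comp (continuous_id.div_const ℓ)
        · intro y _; exact h1 y
    _ ≤ 4 * ∫ Y in (0 : ℝ)..1, 32 / (|cos (π * Y)| + √ε) := by
        apply periodic_bound (f := fun y => 32 / (|cos (π * y)| + √ε)) hc2 _ _ hl hl1
        · intro x; positivity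
        · intro x; simp only [mul_add, mul_one, cos_add_pi, abs_neg]
    _ ≤ _ := by have := outer_bound hε h4; linarith

lemma disc_bound {ε ℓ : ℝ} (hε : 0 < ε) (h4 : ε ≤ 1 / 4) (hl : 0 < ℓ) (hl1 : ℓ ≤ 1) :
    ∫ x in B1, 1 / (gg (x 0 / ℓ) (x 1 / ℓ) + ε) ≤ 128 * |log ε| := by
  refine le_trans ?_ (square_bound hε h4 hl hl1)
  have hne : ∀ a b, gg a b + ε ≠ 0 := fun a b => by have := gg_nonneg a b; positivity
  set F : ℝ × ℝ → ℝ := fun p => 1 / (gg (p.2 / ℓ) (p.1 / ℓ) + ε) with hF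
  have hFc : Continuous F := by
    apply Continuous.div (by fun_prop) (by unfold gg; fun_prop)
    intro x; exact hne _ _
  have hF0 : ∀ p, 0 ≤ F p := fun p => by have := gg_nonneg (p.2 / ℓ) (p.1 / ℓ); positivity
  let e : Pt → ℝ × ℝ := fun x => (x 1, x 0)
  let S : Set (ℝ × ℝ) := Set.Ioc (-1) 1 ×ˢ Set.Ioc (-1) 1
  have hSm : MeasurableSet S := measurableSet_Ioc.prod measurableSet_Ioc
  have he : MeasurePreserving e := by
    have h1 := (volume_preserving_finTwoArrow ℝ).comp (PiLp.volume_preserving_ofLp (Fin 2))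
    exact (Measure.measurePreserving_swap (μ := (volume : Measure ℝ)) (ν := volume)).comp h1
  have hFi : IntegrableOn F S := by
    refine ((hFc.continuousOn (s := Set.Icc (-1) 1 ×ˢ Set.Icc (-1) 1)).integrableOn_compact
      (isCompact_Icc.prod isCompact_Icc)).mono_set ?_
    exact Set.prod_mono Set.Ioc_subset_Icc_self Set.Ioc_subset_Icc_self
  have hIntg : IntegrableOn (F ∘ e) (e ⁻¹' S) := by
    have := he.restrict_preimage hSm
    exact this.integrable_comp_of_integrable hFi
  calc _ ≤ ∫ x in e ⁻¹' S, (F ∘ e) x := by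
        apply setIntegral_mono_set hIntg
        · exact ae_of_all _ fun x => hF0 _
        · apply LE.le.eventuallyLE
          intro x hx
          have h := norm_sq_lt_one hx
          rw [EuclideanSpace.real_norm_sq_eq x, Fin.sum_univ_two] at h
          have a0 := abs_lt.1 ((sq_lt_one_iff_abs_lt_one _).1 (by nlinarith [sq_nonneg (x 1)] : x 0 ^ 2 < 1))
          have a1 := abs_lt.1 ((sq_lt_one_iff_abs_lt_one _).1 (by nlinarith [sq_nonneg (x 0)] : x 1 ^ 2 < 1))
          exact ⟨⟨a1.1, a1.2.le⟩, ⟨a0.1, a0.2.le⟩⟩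
    _ = ∫ p in S, F p := by
        have := he.restrict_preimage hSm
        rw [← this.map_eq, integral_map this.measurable.aemeasurable hFc.aestronglyMeasurable]
        rfl
    _ = _ := by
        rw [Measure.volume_eq_prod, setIntegral_prod _ (by rw [← Measure.volume_eq_prod]; exact hFi)]
        rw [intervalIntegral.integral_of_le (by norm_num)]
        simp only [intervalIntegral.integral_of_le (show (-1 : ℝ) ≤ 1 by norm_num), hF]

/-- C¹ bump. -/
def chi (t : ℝ) : ℝ := if |t| ≤ 1 then (1 + cos (π * t)) / 2 else 0

/-- its derivative -/
def chi' (t : ℝ) : ℝ := if |t| ≤ 1 then -(π / 2) * sin (π * t) else 0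

lemma chi_zero {t : ℝ} (h : 1 ≤ |t|) : chi t = 0 := by
  unfold chi
  split_ifs with h1
  · rcases (abs_eq (by norm_num)).1 (le_antisymm h1 h) with rfl | rfl <;> simp
  · rfl

lemma chi'_zero {t : ℝ} (h : 1 ≤ |t|) : chi' t = 0 := by
  unfold chi'
  split_ifs with h1
  · rcases (abs_eq (by norm_num)).1 (le_antisymm h1 h) with rfl | rfl <;> simp
  · rfl

lemma chi_nonneg (t : ℝ) : 0 ≤ chi t := by
  unfold chi; split_ifs
  · linarith [neg_one_le_cos (π * t)]
  · rfl

lemma chi_le (t : ℝ) : chi t ≤ 1 := by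
  unfold chi; split_ifs
  · linarith [cos_le_one (π * t)]
  · norm_num

lemma chi'_le (t : ℝ) : |chi' t| ≤ 2 := by
  unfold chi'; split_ifs
  · rw [abs_mul, abs_neg, abs_of_pos (by positivity)]
    nlinarith [abs_sin_le_one (π * t), pi_lt_four, abs_nonneg (sin (π * t)), pi_pos]
  · norm_num

lemma chi_hasDerivAt (t : ℝ) : HasDerivAt chi (chi' t) t := by
  have hcos : ∀ t : ℝ, HasDerivAt (fun t => (1 + cos (π * t)) / 2) (-(π / 2) * sin (π * t)) t := by
    intro t
    have := ((((hasDerivAt_id t).const_mul π).cos).const_add 1).div_const 2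
    refine this.congr_deriv ?_
    simp only [id]; ring
  rcases lt_trichotomy |t| 1 with h | h | h
  · have : chi' t = -(π / 2) * sin (π * t) := by simp [chi', h.le]
    rw [this]
    refine (hcos t).congr_of_eventuallyEq ?_
    have : ∀ᶠ s in nhds t, |s| < 1 := (continuous_abs.tendsto t).eventually_lt_const h
    filter_upwards [this] with s hs
    simp [chi, hs.le]
  · have h0 : chi' t = 0 := chi'_zero h.ge
    have h1 : -(π / 2) * sin (π * t) = 0 := by rw [← h0]; simp [chi', h.le]
    rw [h0, ← hasDerivWithinAt_univ]
    have hu : (Set.univ : Set ℝ) = {s | |s| ≤ 1} ∪ {s | 1 ≤ |s|} := by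
      ext s; simp [le_total]
    rw [hu]
    refine HasDerivWithinAt.union ?_ ?_
    · have := (hcos t).hasDerivWithinAt (s := {s | |s| ≤ 1})
      rw [h1] at this
      refine this.congr ?_ ?_
      · intro s hs; simp only [Set.mem_ofPred_eq] at hs; simp [chi, hs]
      · simp [chi, h.le]
    · refine (hasDerivWithinAt_const t {s : ℝ | 1 ≤ |s|} (0 : ℝ)).congr ?_ ?_
      · intro s hs; exact chi_zero hs
      · exact chi_zero h.ge
  · rw [chi'_zero h.le]
    refine (hasDerivAt_const t (0 : ℝ)).congr_of_eventuallyEq ?_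
    have : ∀ᶠ s in nhds t, 1 < |s| := (continuous_abs.tendsto t).eventually_const_lt h
    filter_upwards [this] with s hs
    exact chi_zero hs.le

lemma chi_contDiff : ContDiff ℝ 1 chi := by
  rw [contDiff_one_iff_deriv]
  refine ⟨fun t => (chi_hasDerivAt t).differentiableAt, ?_⟩
  have : deriv chi = chi' := funext fun t => (chi_hasDerivAt t).deriv
  rw [this]
  unfold chi'
  refine Continuous.if_le (by fun_prop) (by fun_prop) (by fun_prop) (by fun_prop) ?_
  intro t ht
  rcases (abs_eq (by norm_num)).1 ht with rfl | rfl <;> simp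

/-- Two-term lemma. -/
lemma sum_two {M : Type*} [AddCommMonoid M] {N : ℤ} {y : ℝ} (h1 : -(N : ℝ) ≤ y) (h2 : y < N)
    (f : ℤ → M) (hf : ∀ n : ℤ, 1 ≤ |y - n| → f n = 0) :
    ∑ n ∈ Finset.Icc (-N) N, f n = f ⌊y⌋ + f (⌊y⌋ + 1) := by
  have hm1 : -N ≤ ⌊y⌋ := by rw [Int.le_floor]; push_cast; exact h1
  have hm2 : ⌊y⌋ < N := by rw [Int.floor_lt]; exact h2
  rw [← Finset.sum_pair (by omega : ⌊y⌋ ≠ ⌊y⌋ + 1)]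
  symm
  apply Finset.sum_subset
  · intro n hn
    simp only [Finset.mem_insert, Finset.mem_singleton] at hn
    rw [Finset.mem_Icc]; omega
  · intro n _ hn
    simp only [Finset.mem_insert, Finset.mem_singleton, not_or] at hn
    apply hf
    have a1 := Int.floor_le y
    have a2 := Int.lt_floor_add_one y
    rcases lt_or_gt_of_ne hn.1 with h | h
    · have : (n : ℝ) + 1 ≤ ⌊y⌋ := by exact_mod_cast h
      exact le_trans (by linarith) (le_abs_self _)
    · have : (⌊y⌋ : ℝ) + 2 ≤ n := by
        have : ⌊y⌋ + 2 ≤ n := by omega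
        exact_mod_cast this
      exact le_trans (by linarith) (neg_le_abs _)

/-- vortex lattice, Landau gauge part -/
def WW (Ω ℓ : ℝ) (N : ℤ) (a b : ℝ) : ℂ :=
  ∑ n ∈ Finset.Icc (-N) N, (chi (b / ℓ - n) : ℂ) * Complex.exp (-(Complex.I * (Ω * ℓ * n * a : ℝ)))

/-- vortex lattice, symmetric gauge -/
def VV (Ω ℓ : ℝ) (N : ℤ) (a b : ℝ) : ℂ :=
  Complex.exp (Complex.I * (Ω * a * b / 2 : ℝ)) * WW Ω ℓ N a b

lemma norm_cexp_neg (r : ℝ) : ‖Complex.exp (-(Complex.I * (r : ℂ)))‖ = 1 := by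
  have : -(Complex.I * (r : ℂ)) = ((-r : ℝ) : ℂ) * Complex.I := by push_cast; ring
  rw [this, Complex.norm_exp_ofReal_mul_I]

lemma norm_cexp_pos (r : ℝ) : ‖Complex.exp (Complex.I * (r : ℂ))‖ = 1 := by
  rw [mul_comm, Complex.norm_exp_ofReal_mul_I]

lemma VV_deriv_a {Ω ℓ : ℝ} (hΩ : 0 < Ω) (hl : 0 < ℓ) {N : ℤ} (a : ℝ) {b : ℝ}
    (h1 : -(N : ℝ) ≤ b / ℓ) (h2 : b / ℓ < N) :
    ∃ d, HasDerivAt (fun s => VV Ω ℓ N s b) d a ∧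
      ‖d + Complex.I * ((Ω * b / 2 : ℝ) : ℂ) * VV Ω ℓ N a b‖ ≤ 2 * (Ω * ℓ) := by
  have hn : ∀ n : ℤ, HasDerivAt (fun s : ℝ => (chi (b / ℓ - n) : ℂ) *
      Complex.exp (-(Complex.I * (Ω * ℓ * n * s : ℝ))))
      ((chi (b / ℓ - n) : ℂ) * (Complex.exp (-(Complex.I * (Ω * ℓ * n * a : ℝ))) *
        (-(Complex.I * (Ω * ℓ * n : ℝ))))) a := by
    intro n
    apply HasDerivAt.const_mul
    apply HasDerivAt.cexp
    apply HasDerivAt.fun_neg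
    apply HasDerivAt.const_mul
    apply HasDerivAt.ofReal_comp
    simpa using (hasDerivAt_id a).const_mul (Ω * ℓ * n)
  have hE : HasDerivAt (fun s : ℝ => Complex.exp (Complex.I * (Ω * s * b / 2 : ℝ)))
      (Complex.exp (Complex.I * (Ω * a * b / 2 : ℝ)) * (Complex.I * (Ω * b / 2 : ℝ))) a := by
    apply HasDerivAt.cexp
    apply HasDerivAt.const_mul
    apply HasDerivAt.ofReal_comp
    refine ((((hasDerivAt_id a).const_mul Ω).mul_const b).div_const 2).congr_deriv (by ring)
  have hW := HasDerivAt.fun_sum (u := Finset.Icc (-N) N) (fun n _ => hn n)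
  refine ⟨_, hE.mul hW, ?_⟩
  have key : ∀ n : ℤ, 1 ≤ |b / ℓ - n| → (chi (b / ℓ - n) : ℂ) *
      (Complex.exp (-(Complex.I * (Ω * ℓ * n * a : ℝ))) *
        (Complex.I * ((Ω * ℓ * (b / ℓ - n) : ℝ) : ℂ))) = 0 := by
    intro n hn; simp [chi_zero hn]
  have e := sum_two h1 h2 _ key
  have bd : ∀ n : ℤ, ‖(chi (b / ℓ - n) : ℂ) *
      (Complex.exp (-(Complex.I * (Ω * ℓ * n * a : ℝ))) *
        (Complex.I * ((Ω * ℓ * (b / ℓ - n) : ℝ) : ℂ)))‖ ≤ Ω * ℓ := by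
    intro n
    rw [norm_mul, norm_mul, norm_cexp_neg, norm_mul, Complex.norm_I, one_mul, one_mul,
      Complex.norm_real, Complex.norm_real, norm_of_nonneg (chi_nonneg _), norm_mul,
      norm_of_nonneg (by positivity : 0 ≤ Ω * ℓ), Real.norm_eq_abs]
    have hp : 0 < Ω * ℓ := by positivity
    rcases le_total 1 |b / ℓ - n| with h | h
    · rw [chi_zero h, zero_mul]; exact hp.le
    · have := mul_le_one₀ (chi_le (b / ℓ - n)) (abs_nonneg _) h
      calc _ = Ω * ℓ * (chi (b / ℓ - n) * |b / ℓ - n|) := by ring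
        _ ≤ _ := mul_le_of_le_one_right hp.le this
  have hD : ∀ E A B c : ℂ, E * c * A + E * B + c * (E * A) = E * (2 * c * A + B) := by
    intros; ring
  have goal_eq : Complex.exp (Complex.I * (Ω * a * b / 2 : ℝ)) * (Complex.I * (Ω * b / 2 : ℝ)) *
        (∑ n ∈ Finset.Icc (-N) N, (chi (b / ℓ - n) : ℂ) *
          Complex.exp (-(Complex.I * (Ω * ℓ * n * a : ℝ)))) +
      Complex.exp (Complex.I * (Ω * a * b / 2 : ℝ)) *
        (∑ n ∈ Finset.Icc (-N) N, (chi (b / ℓ - n) : ℂ) *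
          (Complex.exp (-(Complex.I * (Ω * ℓ * n * a : ℝ))) * (-(Complex.I * (Ω * ℓ * n : ℝ))))) +
      Complex.I * ((Ω * b / 2 : ℝ) : ℂ) * VV Ω ℓ N a b =
      Complex.exp (Complex.I * (Ω * a * b / 2 : ℝ)) *
        ∑ n ∈ Finset.Icc (-N) N, (chi (b / ℓ - n) : ℂ) *
      (Complex.exp (-(Complex.I * (Ω * ℓ * n * a : ℝ))) *
        (Complex.I * ((Ω * ℓ * (b / ℓ - n) : ℝ) : ℂ))) := by
    unfold VV WW
    rw [hD, Finset.mul_sum, ← Finset.sum_add_distrib]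
    congr 1
    apply Finset.sum_congr rfl
    intro n _
    have : Ω * ℓ * (b / ℓ - n) = Ω * b - Ω * ℓ * n := by field_simp
    rw [this]
    push_cast
    ring
  refine (le_of_eq (congrArg norm goal_eq)).trans ?_
  rw [e, norm_mul, norm_cexp_pos, one_mul]
  refine (norm_add_le _ _).trans ?_
  linarith [bd ⌊b / ℓ⌋, bd (⌊b / ℓ⌋ + 1)]

lemma VV_deriv_b {Ω ℓ : ℝ} (hl : 0 < ℓ) {N : ℤ} (a : ℝ) {b : ℝ}
    (h1 : -(N : ℝ) ≤ b / ℓ) (h2 : b / ℓ < N) :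
    ∃ d, HasDerivAt (fun s => VV Ω ℓ N a s) d b ∧
      ‖d + Complex.I * ((-(Ω * a / 2) : ℝ) : ℂ) * VV Ω ℓ N a b‖ ≤ 4 / ℓ := by
  have hn : ∀ n : ℤ, HasDerivAt (fun s : ℝ => (chi (s / ℓ - n) : ℂ) *
      Complex.exp (-(Complex.I * (Ω * ℓ * n * a : ℝ))))
      (((chi' (b / ℓ - n) * (1 / ℓ) : ℝ) : ℂ) * Complex.exp (-(Complex.I * (Ω * ℓ * n * a : ℝ)))) b := by
    intro n
    apply HasDerivAt.mul_const
    apply HasDerivAt.ofReal_comp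
    exact (chi_hasDerivAt (b / ℓ - n)).comp b (((hasDerivAt_id b).div_const ℓ).sub_const (n : ℝ))
  have hE : HasDerivAt (fun s : ℝ => Complex.exp (Complex.I * (Ω * a * s / 2 : ℝ)))
      (Complex.exp (Complex.I * (Ω * a * b / 2 : ℝ)) * (Complex.I * (Ω * a / 2 : ℝ))) b := by
    apply HasDerivAt.cexp
    apply HasDerivAt.const_mul
    apply HasDerivAt.ofReal_comp
    refine (((hasDerivAt_id b).const_mul (Ω * a)).div_const 2).congr_deriv (by ring)
  have hW := HasDerivAt.fun_sum (u := Finset.Icc (-N) N) (fun n _ => hn n)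
  refine ⟨_, hE.mul hW, ?_⟩
  have key : ∀ n : ℤ, 1 ≤ |b / ℓ - n| → ((chi' (b / ℓ - n) * (1 / ℓ) : ℝ) : ℂ) *
      Complex.exp (-(Complex.I * (Ω * ℓ * n * a : ℝ))) = 0 := by
    intro n hn; simp [chi'_zero hn]
  have e := sum_two h1 h2 _ key
  have bd : ∀ n : ℤ, ‖((chi' (b / ℓ - n) * (1 / ℓ) : ℝ) : ℂ) *
      Complex.exp (-(Complex.I * (Ω * ℓ * n * a : ℝ)))‖ ≤ 2 / ℓ := by
    intro n
    rw [norm_mul, norm_cexp_neg, mul_one, Complex.norm_real, Real.norm_eq_abs, abs_mul,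
      abs_of_pos (by positivity : 0 < 1 / ℓ)]
    calc _ ≤ 2 * (1 / ℓ) := by gcongr; exact chi'_le _
      _ = _ := by ring
  have goal_eq : ∀ E A B : ℂ, E * (Complex.I * ((Ω * a / 2 : ℝ) : ℂ)) * A + E * B +
      Complex.I * ((-(Ω * a / 2) : ℝ) : ℂ) * (E * A) = E * B := by
    intros; push_cast; ring
  unfold VV WW
  rw [goal_eq, e, norm_mul, norm_cexp_pos, one_mul]
  refine (norm_add_le _ _).trans ?_
  have := bd ⌊b / ℓ⌋
  have := bd (⌊b / ℓ⌋ + 1)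
  have e4 : 4 / ℓ = 2 / ℓ + 2 / ℓ := by ring
  linarith

lemma VV_contDiff (Ω ℓ : ℝ) (N : ℤ) : ContDiff ℝ 1 (fun x : Pt => VV Ω ℓ N (x 0) (x 1)) := by
  unfold VV WW
  have h0 : ContDiff ℝ 1 (fun x : Pt => x 0) := by fun_prop
  have h1 : ContDiff ℝ 1 (fun x : Pt => x 1) := by fun_prop
  have hof : ContDiff ℝ 1 (fun r : ℝ => (r : ℂ)) := Complex.ofRealCLM.contDiff
  have hchi := chi_contDiff
  apply ContDiff.mul
  · apply ContDiff.cexp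
    apply contDiff_const.mul
    exact hof.comp (by fun_prop)
  · apply ContDiff.sum
    intro n _
    apply ContDiff.mul
    · exact hof.comp (hchi.comp (by fun_prop))
    · apply ContDiff.cexp
      apply ContDiff.neg
      apply contDiff_const.mul
      exact hof.comp (by fun_prop)

lemma VV_norm_sq {Ω ℓ : ℝ} (hl : 0 < ℓ) (hΩ : Ω * ℓ ^ 2 = 2 * π) {N : ℤ} (a : ℝ) {b : ℝ}
    (h1 : -(N : ℝ) ≤ b / ℓ) (h2 : b / ℓ < N) :
    ‖VV Ω ℓ N a b‖ ^ 2 = gg (a / ℓ) (b / ℓ) := by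
  unfold VV WW
  rw [norm_mul, norm_cexp_pos, one_mul, sum_two h1 h2 _ (by intro n hn; simp [chi_zero hn])]
  set m := ⌊b / ℓ⌋ with hm
  set t := b / ℓ - m with ht
  have ht0 : 0 ≤ t := by have := Int.floor_le (b / ℓ); linarith
  have ht1 : t ≤ 1 := by have := Int.lt_floor_add_one (b / ℓ); linarith
  have hx : Ω * ℓ * a = 2 * (π * (a / ℓ)) := by
    field_simp; linear_combination a * hΩ
  have e1 : Complex.exp (-(Complex.I * ((Ω * ℓ * ((m + 1 : ℤ) : ℝ) * a : ℝ) : ℂ))) =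
      Complex.exp (-(Complex.I * ((Ω * ℓ * m * a : ℝ) : ℂ))) *
        Complex.exp (((-(2 * (π * (a / ℓ))) : ℝ) : ℂ) * Complex.I) := by
    rw [← Complex.exp_add, ← hx]
    congr 1; push_cast; ring
  have c1 : chi t = (1 + cos (π * t)) / 2 := by
    unfold chi; rw [if_pos]; rw [abs_of_nonneg ht0]; exact ht1
  have c2 : chi (b / ℓ - ((m + 1 : ℤ) : ℝ)) = (1 - cos (π * t)) / 2 := by
    have : b / ℓ - ((m + 1 : ℤ) : ℝ) = t - 1 := by push_cast; rw [ht]; ring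
    rw [this]
    unfold chi; rw [if_pos]
    · rw [mul_sub, mul_one, cos_sub_pi]; ring
    · rw [abs_of_nonpos (by linarith)]; linarith
  have s1 : sin (π * (b / ℓ)) ^ 2 = 1 - cos (π * t) ^ 2 := by
    have : π * (b / ℓ) = π * t + m * π := by rw [ht]; ring
    rw [← sin_sq, this, sin_add_int_mul_pi, mul_pow, ← zpow_natCast, ← zpow_mul, mul_comm m,
      zpow_mul]
    simp
  rw [e1, c1, c2]
  have : ∀ A B E F : ℂ, A * E + B * (E * F) = E * (A + B * F) := by intros; ring
  rw [this, norm_mul, norm_cexp_neg, one_mul]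
  unfold gg
  rw [s1, ← Complex.normSq_eq_norm_sq, Complex.normSq_apply, Complex.exp_ofReal_mul_I]
  rw [cos_neg, sin_neg, cos_two_mul, sin_two_mul]
  simp only [Complex.add_re, Complex.add_im, Complex.mul_re, Complex.mul_im, Complex.ofReal_re,
    Complex.ofReal_im, Complex.I_re, Complex.I_im]
  have := sin_sq_add_cos_sq (π * (a / ℓ))
  generalize cos (π * t) = c
  generalize sin (π * (a / ℓ)) = S at *
  generalize cos (π * (a / ℓ)) = K at *
  have hK : K ^ 2 = 1 - S ^ 2 := by linarith
  ring_nf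
  rw [show K ^ 4 = (K ^ 2) ^ 2 by ring, hK]
  ring

/-- one-dimensional kinetic estimate -/
lemma kin_bound {v : ℝ → ℂ} {s : ℝ → ℝ} {v' : ℂ} {s' t ε : ℝ} (a : ℝ) (hε : 0 < ε)
    (hv : HasDerivAt v v' t) (hs : HasDerivAt s s' t) :
    ∃ d, HasDerivAt (fun u => (s u : ℂ) * v u * (((√(‖v u‖ ^ 2 + ε))⁻¹ : ℝ) : ℂ)) d t ∧
      ‖d + Complex.I * (a : ℂ) * ((s t : ℂ) * v t * (((√(‖v t‖ ^ 2 + ε))⁻¹ : ℝ) : ℂ))‖ ^ 2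
      ≤ 2 * s' ^ 2 + 8 * s t ^ 2 * ‖v' + Complex.I * a * v t‖ ^ 2 / (‖v t‖ ^ 2 + ε) := by
  have hpos : 0 < ‖v t‖ ^ 2 + ε := by positivity
  have hr := ((hv.norm_sq.add_const ε).sqrt hpos.ne').fun_inv (sqrt_pos.2 hpos).ne'
  refine ⟨_, (hs.ofReal_comp.mul hv).mul hr.ofReal_comp, ?_⟩
  have hr0 := sqrt_pos.2 hpos
  have hr2 : √(‖v t‖ ^ 2 + ε) ^ 2 = ‖v t‖ ^ 2 + ε := sq_sqrt hpos.le
  rw [← hr2]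
  simp only [Real.sqrt_sq hr0.le]
  set r := √(‖v t‖ ^ 2 + ε) with hrdef
  set w := v' + Complex.I * a * v t with hw
  have hin : inner ℝ (v t) v' = inner ℝ (v t) w := by
    rw [hw, inner_add_right]
    have : inner ℝ (v t) (Complex.I * a * v t) = 0 := by
      rw [Complex.inner]; simp; ring
    rw [this, add_zero]
  have hin2 : |inner ℝ (v t) w| ≤ ‖v t‖ * ‖w‖ := abs_real_inner_le_norm _ _
  rw [hin]
  generalize hq : inner ℝ (v t) w = q at *
  have hvr : ‖v t‖ ≤ r := by
    apply le_sqrt_of_sq_le; linarith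
  have eq : ((s' : ℂ) * v t + (s t : ℂ) * v') * ((r⁻¹ : ℝ) : ℂ) +
      (s t : ℂ) * v t * ((-(2 * q / (2 * r)) / r ^ 2 : ℝ) : ℂ) +
      Complex.I * a * ((s t : ℂ) * v t * ((r⁻¹ : ℝ) : ℂ)) =
      ((s' / r : ℝ) : ℂ) * v t + ((s t / r : ℝ) : ℂ) * w + ((-(s t * q / r ^ 3) : ℝ) : ℂ) * v t := by
    have hrc : (r : ℂ) ≠ 0 := by exact_mod_cast hr0.ne'
    rw [hw]; push_cast; field_simp; ring
  have hfin : ‖((s' : ℂ) * v t + (s t : ℂ) * v') * ((r⁻¹ : ℝ) : ℂ) +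
      (s t : ℂ) * v t * ((-(2 * q / (2 * r)) / r ^ 2 : ℝ) : ℂ) +
      Complex.I * a * ((s t : ℂ) * v t * ((r⁻¹ : ℝ) : ℂ))‖ ≤ |s'| + 2 * (|s t| * ‖w‖ / r) := by
    rw [eq]
    refine (norm_add₃_le).trans ?_
    rw [norm_mul, norm_mul, norm_mul, Complex.norm_real, Complex.norm_real, Complex.norm_real,
      Real.norm_eq_abs, Real.norm_eq_abs, Real.norm_eq_abs, abs_neg, abs_div, abs_div, abs_div,
      abs_mul, abs_of_pos hr0, abs_of_pos (by positivity : 0 < r ^ 3)]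
    have t1 : |s'| / r * ‖v t‖ ≤ |s'| := by
      rw [div_mul_eq_mul_div, div_le_iff₀ hr0]; gcongr
    have t2 : |s t| / r * ‖w‖ = |s t| * ‖w‖ / r := by ring
    have t3 : |s t| * |q| / r ^ 3 * ‖v t‖ ≤ |s t| * ‖w‖ / r := by
      calc _ ≤ |s t| * (r * ‖w‖) / r ^ 3 * r := by
            gcongr
            exact hin2.trans (by gcongr)
        _ = _ := by field_simp
    linarith
  refine (pow_le_pow_left₀ (norm_nonneg _) hfin 2).trans ?_
  have : 8 * s t ^ 2 * ‖w‖ ^ 2 / r ^ 2 = 8 * (|s t| * ‖w‖ / r) ^ 2 := by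
    rw [div_pow, mul_pow, sq_abs]; ring
  rw [this, ← sq_abs s']
  nlinarith [sq_nonneg (|s'| - 2 * (|s t| * ‖w‖ / r))]

/-- smooth positive part -/
def mm (η t : ℝ) : ℝ := (t + √(t ^ 2 + η ^ 2)) / 2

lemma mm_mul (η t : ℝ) : mm η t * (mm η t - t) = η ^ 2 / 4 := by
  have : √(t ^ 2 + η ^ 2) ^ 2 = t ^ 2 + η ^ 2 := sq_sqrt (by positivity)
  unfold mm; linear_combination this / 4

lemma abs_lt_root {η : ℝ} (hη : 0 < η) (t : ℝ) : |t| < √(t ^ 2 + η ^ 2) := by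
  apply lt_sqrt_of_sq_lt; rw [sq_abs]; nlinarith [sq_pos_of_pos hη]

lemma mm_pos {η : ℝ} (hη : 0 < η) (t : ℝ) : 0 < mm η t := by
  have := abs_lt_root hη t
  have := neg_le_abs t
  unfold mm; linarith

lemma mm_ge {η : ℝ} (hη : 0 < η) (t : ℝ) : t < mm η t := by
  have := abs_lt_root hη t
  have := le_abs_self t
  unfold mm; linarith

lemma mm_le {η t T : ℝ} (hη : 0 < η) (hT : 0 ≤ T) (h : t ≤ T) : mm η t ≤ T + η / 2 := by
  by_contra! hc
  have := mm_mul η t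
  nlinarith [mul_pos (by linarith : 0 < mm η t - η / 2) (by linarith : 0 < mm η t - t - η / 2)]

lemma mm_energy {η : ℝ} (hη : 0 < η) (t : ℝ) :
    mm η t ^ 2 - 2 * t * mm η t ≤ -(max t 0) ^ 2 + η ^ 2 / 2 := by
  have h1 := mm_mul η t
  have h2 := mm_pos hη t
  have h3 := mm_ge hη t
  rcases le_total t 0 with h | h
  · rw [max_eq_right h]; nlinarith
  · rw [max_eq_left h]; nlinarith

lemma mm_contDiff {η : ℝ} (hη : 0 < η) : ContDiff ℝ 1 (mm η) := by
  unfold mm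
  have : ContDiff ℝ 1 (fun t : ℝ => √(t ^ 2 + η ^ 2)) := by
    apply ContDiff.sqrt (by fun_prop)
    intro x; positivity
  exact (contDiff_id.add this).div_const 2

lemma sqrt_mm_deriv {η : ℝ} (hη : 0 < η) {T : ℝ → ℝ} {T' u : ℝ} (hT : HasDerivAt T T' u) :
    ∃ d, HasDerivAt (fun u => √(mm η (T u))) d u ∧ d ^ 2 ≤ T' ^ 2 / (4 * η) := by
  have hp : (T u) ^ 2 + η ^ 2 ≠ 0 := by positivity
  have h1 := ((hT.add (((hT.pow 2).add_const (η ^ 2)).sqrt hp)).div_const 2)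
  have h2 := h1.sqrt (mm_pos hη (T u)).ne'
  refine ⟨_, h2, ?_⟩
  have hr := abs_lt_root hη (T u)
  have hr2 : √(T u ^ 2 + η ^ 2) ^ 2 = T u ^ 2 + η ^ 2 := sq_sqrt (by positivity)
  have hrη : η ≤ √(T u ^ 2 + η ^ 2) := by apply le_sqrt_of_sq_le; nlinarith [sq_nonneg (T u)]
  have hm := mm_pos hη (T u)
  have hmr : mm η (T u) ≤ √(T u ^ 2 + η ^ 2) := by
    have := le_abs_self (T u)
    unfold mm; linarith
  have hmm : mm η (T u) = (T u + √(T u ^ 2 + η ^ 2)) / 2 := rfl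
  have hsq : √(mm η (T u)) ^ 2 = mm η (T u) := sq_sqrt hm.le
  have hs := sqrt_pos.2 hm
  change ((T' + (2 : ℕ) * T u ^ (2 - 1) * T' / (2 * √(T u ^ 2 + η ^ 2))) / 2 /
    (2 * √(mm η (T u)))) ^ 2 ≤ _
  generalize √(T u ^ 2 + η ^ 2) = r at *
  generalize √(mm η (T u)) = s at *
  generalize mm η (T u) = m at *
  have hr0 : 0 < r := by linarith
  have e : ((T' + (2 : ℕ) * T u ^ (2 - 1) * T' / (2 * r)) / 2 / (2 * s)) ^ 2
      = T' ^ 2 / 4 * (m / r ^ 2) := by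
    have : (T' + (2 : ℕ) * T u ^ (2 - 1) * T' / (2 * r)) / 2 = T' * m / r := by
      rw [hmm]; norm_num; field_simp; ring
    rw [this, div_pow, div_pow, mul_pow, mul_pow, hsq]
    field_simp; norm_num
  rw [e]
  have : m / r ^ 2 ≤ 1 / η := by
    rw [div_le_div_iff₀ (by positivity) hη]; nlinarith
  calc _ ≤ T' ^ 2 / 4 * (1 / η) := by gcongr
    _ = _ := by field_simp

/-- chemical-potential profile -/
def TT (Ω₀ l a b : ℝ) : ℝ := (l + Ω₀ ^ 2 * (a ^ 2 + b ^ 2) / 4) / 2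

lemma normsq (x : Pt) : ‖x‖ ^ 2 = x 0 ^ 2 + x 1 ^ 2 := by
  rw [EuclideanSpace.real_norm_sq_eq x, Fin.sum_univ_two]

lemma B1_ae : B1 =ᵐ[volume] Metric.closedBall (0 : Pt) 1 := by
  unfold B1
  rw [ae_eq_set]
  constructor
  · rw [Set.sdiff_eq_empty.2 Metric.ball_subset_closedBall]; simp
  · rw [Metric.closedBall_sdiff_ball]
    exact Measure.addHaar_sphere_of_ne_zero _ _ one_ne_zero

lemma const_int (c : ℝ) : ∫ _ in B1, c = π * c := by
  rw [integral_const, vol_B1_real, smul_eq_mul]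

lemma exists_mu {Ω₀ η : ℝ} (hη : 0 < η) (h1 : η ≤ 1) {q : Pt → ℝ} (hq : Continuous q)
    (hq0 : ∀ x, 0 ≤ q x) (hq1 : ∀ x, q x ≤ 1) (hqi : ∫ x in B1, (1 - q x) ≤ π / 2) :
    ∃ l ≤ 4 / π, ∫ x in B1, mm η (TT Ω₀ l (x 0) (x 1)) * q x = 1 := by
  have hmc := (mm_contDiff hη).continuous
  have hcont : Continuous fun l : ℝ => ∫ x in B1, mm η (TT Ω₀ l (x 0) (x 1)) * q x := by
    have := continuous_parametric_integral_of_continuous (μ := (volume : Measure Pt))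
      (f := fun (l : ℝ) (x : Pt) => mm η (TT Ω₀ l (x 0) (x 1)) * q x) (by
        unfold Function.uncurry TT
        fun_prop) (isCompact_closedBall (0 : Pt) 1)
    refine this.congr fun l => ?_
    exact (setIntegral_congr_set B1_ae).symm
  have hIntg : ∀ l, IntegrableOn (fun x : Pt => mm η (TT Ω₀ l (x 0) (x 1)) * q x) B1 := by
    intro l
    apply integrableOn_of_cont
    unfold TT; fun_prop
  have hlow : ∫ x in B1, mm η (TT Ω₀ (-2 - Ω₀ ^ 2 / 4) (x 0) (x 1)) * q x ≤ 1 := by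
    have : ∫ x in B1, mm η (TT Ω₀ (-2 - Ω₀ ^ 2 / 4) (x 0) (x 1)) * q x ≤ ∫ _ in B1, (1 / 4 : ℝ) := by
      refine setIntegral_mono_on (hIntg _) (integrableOn_of_cont continuous_const) measB1 ?_
      intro x hx
      have hx1 := norm_sq_lt_one hx
      rw [normsq] at hx1
      have hT : TT Ω₀ (-2 - Ω₀ ^ 2 / 4) (x 0) (x 1) ≤ -1 := by
        unfold TT; nlinarith [sq_nonneg Ω₀]
      have hm := mm_mul η (TT Ω₀ (-2 - Ω₀ ^ 2 / 4) (x 0) (x 1))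
      have hm0 := mm_pos hη (TT Ω₀ (-2 - Ω₀ ^ 2 / 4) (x 0) (x 1))
      have : mm η (TT Ω₀ (-2 - Ω₀ ^ 2 / 4) (x 0) (x 1)) ≤ 1 / 4 := by nlinarith
      calc _ ≤ mm η (TT Ω₀ (-2 - Ω₀ ^ 2 / 4) (x 0) (x 1)) * 1 := by gcongr; exact hq1 x
        _ ≤ _ := by linarith
    rw [const_int] at this
    linarith [pi_lt_four]
  have hhigh : 1 ≤ ∫ x in B1, mm η (TT Ω₀ (4 / π) (x 0) (x 1)) * q x := by
    have : ∫ x in B1, 2 / π * q x ≤ ∫ x in B1, mm η (TT Ω₀ (4 / π) (x 0) (x 1)) * q x := by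
      refine setIntegral_mono_on (integrableOn_of_cont (by fun_prop)) (hIntg _) measB1 ?_
      intro x hx
      have hT : 2 / π ≤ TT Ω₀ (4 / π) (x 0) (x 1) := by
        have : 0 ≤ Ω₀ ^ 2 * (x 0 ^ 2 + x 1 ^ 2) / 4 := by positivity
        have e : 4 / π = 2 * (2 / π) := by ring
        unfold TT; linarith
      have := mm_ge hη (TT Ω₀ (4 / π) (x 0) (x 1))
      exact mul_le_mul_of_nonneg_right (by linarith) (hq0 x)
    rw [integral_const_mul] at this
    rw [integral_sub (integrableOn_of_cont continuous_const) (integrableOn_of_cont hq),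
      const_int] at hqi
    have h2 : 2 / π * (π / 2) ≤ 2 / π * ∫ x in B1, q x := by
      gcongr; linarith
    have h3 : 2 / π * (π / 2) = 1 := by field_simp
    linarith
  have hle : -2 - Ω₀ ^ 2 / 4 ≤ 4 / π := by
    have : 0 < 4 / π := by positivity
    nlinarith [sq_nonneg Ω₀]
  obtain ⟨l, hl, hl2⟩ := intermediate_value_Icc hle hcont.continuousOn ⟨hlow, hhigh⟩
  exact ⟨l, hl.2, hl2⟩

lemma tf_lower {Ω₀ l : ℝ} {ρ : Pt → ℝ} (h : tfAdm ρ) :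
    (∫ x in B1, -(max (TT Ω₀ l (x 0) (x 1)) 0) ^ 2) + l ≤ tfEnergy Ω₀ ρ := by
  have hl : ∫ x in B1, l * ρ x = l := by rw [integral_const_mul, h.2.2.2, mul_one]
  have hi : IntegrableOn (fun x : Pt => -(max (TT Ω₀ l (x 0) (x 1)) 0) ^ 2) B1 :=
    integrableOn_of_cont (by unfold TT; fun_prop)
  have hsum := integral_add hi (h.1.const_mul l)
  rw [hl] at hsum
  rw [← hsum]
  unfold tfEnergy
  refine integral_mono_ae (hi.add (h.1.const_mul l)) (h.2.1.sub (tf_integrable h)) ?_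
  filter_upwards [h.2.2.1] with x hx
  rw [normsq]
  have e : Ω₀ ^ 2 * (x 0 ^ 2 + x 1 ^ 2) * ρ x / 4 = (2 * TT Ω₀ l (x 0) (x 1) - l) * ρ x := by
    unfold TT; ring
  rw [e]
  generalize TT Ω₀ l (x 0) (x 1) = t
  rcases le_total t 0 with h | h
  · rw [max_eq_right h]; nlinarith
  · rw [max_eq_left h]; nlinarith [sq_nonneg (ρ x - t)]

lemma pd1_eq {Ψ : Pt → ℂ} {P : ℝ → ℝ → ℂ} (hP : ∀ x, Ψ x = P (x 0) (x 1)) {x : Pt}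
    (hd : DifferentiableAt ℝ Ψ x) {d : ℂ} (h : HasDerivAt (fun s => P s (x 1)) d (x 0)) :
    pd1 Ψ x = d := by
  have h1 : HasDerivAt (fun t : ℝ => Ψ (x + t • EuclideanSpace.single 0 1)) (pd1 Ψ x) 0 :=
    hd.hasFDerivAt.hasLineDerivAt (EuclideanSpace.single 0 1)
  refine h1.unique ?_
  have h2 : HasDerivAt (fun t : ℝ => x 0 + t) 1 0 := (hasDerivAt_id _).const_add _
  have h3 := HasDerivAt.scomp (h := fun t : ℝ => x 0 + t) 0 (by simpa using h) h2
  rw [one_smul] at h3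
  refine h3.congr_of_eventuallyEq (Eventually.of_forall fun t => ?_)
  simp [hP]

lemma pd2_eq {Ψ : Pt → ℂ} {P : ℝ → ℝ → ℂ} (hP : ∀ x, Ψ x = P (x 0) (x 1)) {x : Pt}
    (hd : DifferentiableAt ℝ Ψ x) {d : ℂ} (h : HasDerivAt (fun s => P (x 0) s) d (x 1)) :
    pd2 Ψ x = d := by
  have h1 : HasDerivAt (fun t : ℝ => Ψ (x + t • EuclideanSpace.single 1 1)) (pd2 Ψ x) 0 :=
    hd.hasFDerivAt.hasLineDerivAt (EuclideanSpace.single 1 1)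
  refine h1.unique ?_
  have h2 : HasDerivAt (fun t : ℝ => x 1 + t) 1 0 := (hasDerivAt_id _).const_add _
  have h3 := HasDerivAt.scomp (h := fun t : ℝ => x 1 + t) 0 (by simpa using h) h2
  rw [one_smul] at h3
  refine h3.congr_of_eventuallyEq (Eventually.of_forall fun t => ?_)
  simp [hP]

/-- the trial function in coordinates -/
def PP (Ω₀ l ε Ω ℓ : ℝ) (N : ℤ) (a b : ℝ) : ℂ :=
  (√(mm ε (TT Ω₀ l a b)) : ℂ) * VV Ω ℓ N a b * (((√(‖VV Ω ℓ N a b‖ ^ 2 + ε))⁻¹ : ℝ) : ℂ)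

lemma PP_norm_sq {Ω₀ l ε Ω ℓ : ℝ} (hε : 0 < ε) {N : ℤ} (a b : ℝ) :
    ‖PP Ω₀ l ε Ω ℓ N a b‖ ^ 2 =
      mm ε (TT Ω₀ l a b) * (‖VV Ω ℓ N a b‖ ^ 2 / (‖VV Ω ℓ N a b‖ ^ 2 + ε)) := by
  unfold PP
  rw [norm_mul, norm_mul, mul_pow, mul_pow, Complex.norm_real, Complex.norm_real,
    Real.norm_eq_abs, Real.norm_eq_abs, sq_abs, sq_abs, inv_pow, sq_sqrt (mm_pos hε _).le,
    sq_sqrt (by positivity)]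
  ring

lemma PP_contDiff (Ω₀ l : ℝ) {ε : ℝ} (hε : 0 < ε) (Ω ℓ : ℝ) (N : ℤ) :
    ContDiff ℝ 1 (fun x : Pt => PP Ω₀ l ε Ω ℓ N (x 0) (x 1)) := by
  unfold PP
  have hof : ContDiff ℝ 1 (fun r : ℝ => (r : ℂ)) := Complex.ofRealCLM.contDiff
  have hV := VV_contDiff Ω ℓ N
  have hT : ContDiff ℝ 1 (fun x : Pt => TT Ω₀ l (x 0) (x 1)) := by unfold TT; fun_prop
  apply ContDiff.mul
  · apply ContDiff.mul _ hV
    exact hof.comp (((mm_contDiff hε).comp hT).sqrt fun x => (mm_pos hε _).ne')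
  · apply hof.comp
    apply ContDiff.inv
    · apply ContDiff.sqrt
      · exact (hV.norm_sq ℝ).add contDiff_const
      · intro x; positivity
    · intro x; positivity

lemma gpAdm_of {Ψ : Pt → ℂ} (h : ContDiff ℝ 1 Ψ) (h1 : ∫ x in B1, ‖Ψ x‖ ^ 2 = 1) : gpAdm Ψ := by
  have hc := h.continuous
  have hf := h.continuous_fderiv one_ne_zero
  have p1 : Continuous (pd1 Ψ) := hf.clm_apply continuous_const
  have p2 : Continuous (pd2 Ψ) := hf.clm_apply continuous_const
  refine ⟨(h.differentiable one_ne_zero).differentiableOn, integrableOn_of_cont (by fun_prop),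
    integrableOn_of_cont (by fun_prop), integrableOn_of_cont (by fun_prop),
    integrableOn_of_cont ?_, h1⟩
  unfold angMom
  have : Continuous fun x : Pt => (starRingEnd ℂ) (Ψ x) := Complex.continuous_conj.comp hc
  have c0 : Continuous fun x : Pt => ((x 0 : ℝ) : ℂ) := Complex.continuous_ofReal.comp (by fun_prop)
  have c1 : Continuous fun x : Pt => ((x 1 : ℝ) : ℂ) := Complex.continuous_ofReal.comp (by fun_prop)
  exact Complex.continuous_re.comp (by fun_prop)

lemma kinetic {Ω₀ l ε Ω ℓ : ℝ} (hε : 0 < ε) (hΩ : 0 < Ω) (hl : 0 < ℓ) (hΩl : Ω * ℓ ^ 2 = 2 * π)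
    {N : ℤ} {x : Pt} (hx : x ∈ B1) (hN : 1 / ℓ < N) {Ψ : Pt → ℂ}
    (hΨ : Ψ = fun x => PP Ω₀ l ε Ω ℓ N (x 0) (x 1)) :
    ‖pd1 Ψ x + Complex.I * ((Ω * x 1 / 2 : ℝ) : ℂ) * Ψ x‖ ^ 2
      + ‖pd2 Ψ x - Complex.I * ((Ω * x 0 / 2 : ℝ) : ℂ) * Ψ x‖ ^ 2
    ≤ Ω₀ ^ 4 / (16 * ε) + 320 * mm ε (TT Ω₀ l (x 0) (x 1)) * Ω / (gg (x 0 / ℓ) (x 1 / ℓ) + ε) := by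
  have hd : DifferentiableAt ℝ Ψ x := by
    rw [hΨ]; exact (PP_contDiff Ω₀ l hε Ω ℓ N).differentiable one_ne_zero x
  have hP : ∀ x, Ψ x = PP Ω₀ l ε Ω ℓ N (x 0) (x 1) := fun x => by rw [hΨ]
  have hx1 := norm_sq_lt_one hx
  rw [normsq] at hx1
  have a0 : x 0 ^ 2 ≤ 1 := by nlinarith [sq_nonneg (x 1)]
  have a1 : x 1 ^ 2 ≤ 1 := by nlinarith [sq_nonneg (x 0)]
  have b1 := abs_le.1 ((sq_le_one_iff_abs_le_one _).1 a1)
  have n1 : -(N : ℝ) ≤ x 1 / ℓ := by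
    have : -(1 / ℓ) ≤ x 1 / ℓ := by rw [← neg_div]; gcongr; exact b1.1
    linarith
  have n2 : x 1 / ℓ < N := by
    have : x 1 / ℓ ≤ 1 / ℓ := by gcongr; exact b1.2
    linarith
  have hg := VV_norm_sq hl hΩl (N := N) (x 0) n1 n2
  have hm := mm_pos hε (TT Ω₀ l (x 0) (x 1))
  have hsq : √(mm ε (TT Ω₀ l (x 0) (x 1))) ^ 2 = mm ε (TT Ω₀ l (x 0) (x 1)) := sq_sqrt hm.le
  have hg0 : 0 < gg (x 0 / ℓ) (x 1 / ℓ) + ε := by have := gg_nonneg (x 0 / ℓ) (x 1 / ℓ); linarith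
  -- first direction
  obtain ⟨v1, hv1, bv1⟩ := VV_deriv_a hΩ hl (N := N) (x 0) n1 n2
  have hT1 : HasDerivAt (fun s => TT Ω₀ l s (x 1)) (Ω₀ ^ 2 * x 0 / 4) (x 0) := by
    unfold TT
    refine (((((((hasDerivAt_id (x 0)).pow 2).add_const (x 1 ^ 2)).const_mul (Ω₀ ^ 2)).div_const
      4).const_add l).div_const 2).congr_deriv ?_
    simp; ring
  obtain ⟨s1, hs1, bs1⟩ := sqrt_mm_deriv hε hT1
  obtain ⟨d1, hd1, bd1⟩ := kin_bound (Ω * x 1 / 2) hε hv1 hs1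
  -- second direction
  obtain ⟨v2, hv2, bv2⟩ := VV_deriv_b (Ω := Ω) hl (N := N) (x 0) n1 n2
  have hT2 : HasDerivAt (fun s => TT Ω₀ l (x 0) s) (Ω₀ ^ 2 * x 1 / 4) (x 1) := by
    unfold TT
    refine (((((((hasDerivAt_id (x 1)).pow 2).const_add (x 0 ^ 2)).const_mul (Ω₀ ^ 2)).div_const
      4).const_add l).div_const 2).congr_deriv ?_
    simp; ring
  obtain ⟨s2, hs2, bs2⟩ := sqrt_mm_deriv hε hT2
  obtain ⟨d2, hd2, bd2⟩ := kin_bound (-(Ω * x 0 / 2)) hε hv2 hs2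
  rw [pd1_eq hP hd hd1, pd2_eq hP hd hd2, hP x]
  have e2 : d2 - Complex.I * ((Ω * x 0 / 2 : ℝ) : ℂ) * PP Ω₀ l ε Ω ℓ N (x 0) (x 1)
      = d2 + Complex.I * ((-(Ω * x 0 / 2) : ℝ) : ℂ) * PP Ω₀ l ε Ω ℓ N (x 0) (x 1) := by
    push_cast; ring
  rw [e2]
  refine (add_le_add bd1 bd2).trans ?_
  rw [hg, hsq]
  have c1 := pow_le_pow_left₀ (norm_nonneg _) bv1 2
  have c2 := pow_le_pow_left₀ (norm_nonneg _) bv2 2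
  generalize ‖v1 + _‖ = w1 at *
  generalize ‖v2 + _‖ = w2 at *
  have r1 : (2 * (Ω * ℓ)) ^ 2 = 8 * π * Ω := by
    have : (2 * (Ω * ℓ)) ^ 2 = 4 * Ω * (Ω * ℓ ^ 2) := by ring
    rw [this, hΩl]; ring
  have r2 : (4 / ℓ) ^ 2 = 8 / π * Ω := by
    field_simp; linear_combination -8 * hΩl
  have r3 : w1 ^ 2 + w2 ^ 2 ≤ 40 * Ω := by
    have : 8 * π + 8 / π ≤ 40 := by
      have : 8 / π ≤ 8 / 2 := by gcongr; exact two_le_pi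
      linarith [pi_lt_four]
    rw [r1] at c1; rw [r2] at c2
    nlinarith
  have q1 : (Ω₀ ^ 2 * x 0 / 4) ^ 2 / (4 * ε) ≤ Ω₀ ^ 4 / (64 * ε) := by
    have : (Ω₀ ^ 2 * x 0 / 4) ^ 2 / (4 * ε) = Ω₀ ^ 4 / (64 * ε) * x 0 ^ 2 := by field_simp; ring
    rw [this]; exact mul_le_of_le_one_right (by positivity) a0
  have q2 : (Ω₀ ^ 2 * x 1 / 4) ^ 2 / (4 * ε) ≤ Ω₀ ^ 4 / (64 * ε) := by
    have : (Ω₀ ^ 2 * x 1 / 4) ^ 2 / (4 * ε) = Ω₀ ^ 4 / (64 * ε) * x 1 ^ 2 := by field_simp; ring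
    rw [this]; exact mul_le_of_le_one_right (by positivity) a1
  have q3 : Ω₀ ^ 4 / (16 * ε) = 4 * (Ω₀ ^ 4 / (64 * ε)) := by field_simp; ring
  generalize mm ε (TT Ω₀ l (x 0) (x 1)) = m at *
  generalize gg (x 0 / ℓ) (x 1 / ℓ) + ε = G at *
  have k : 8 * m * w1 ^ 2 / G + 8 * m * w2 ^ 2 / G ≤ 320 * m * Ω / G := by
    rw [← add_div]; gcongr; nlinarith
  linarith

lemma int_four {f g h k : Pt → ℝ} (hf : IntegrableOn f B1) (hg : IntegrableOn g B1)
    (hh : IntegrableOn h B1) (hk : IntegrableOn k B1) :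
    ∫ x in B1, (f x + g x + h x + k x) =
      (∫ x in B1, f x) + (∫ x in B1, g x) + (∫ x in B1, h x) + ∫ x in B1, k x := by
  have a1 : IntegrableOn (fun x => f x + g x) B1 := hf.add hg
  have a2 : IntegrableOn (fun x => f x + g x + h x) B1 := a1.add hh
  rw [integral_add a2 hk, integral_add a1 hh, integral_add hf hg]

lemma pot_bound {m Q t M ε : ℝ} (q0 : 0 ≤ Q) (q1 : Q ≤ 1)
    (hmax : max t 0 ^ 2 ≤ M ^ 2) (hen : m ^ 2 - 2 * t * m ≤ -(max t 0) ^ 2 + ε ^ 2 / 2) :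
    (m * Q) ^ 2 - 2 * t * (m * Q) ≤ -(max t 0) ^ 2 + ε ^ 2 / 2 + M ^ 2 * (1 - Q) := by
  have s1 : 0 ≤ m ^ 2 * (Q * (1 - Q)) :=
    mul_nonneg (by positivity) (mul_nonneg q0 (by linarith))
  have s2 := mul_le_mul_of_nonneg_left hen q0
  have s3 := mul_le_mul_of_nonneg_left hmax (sub_nonneg.2 q1)
  have s4 : Q * (ε ^ 2 / 2) ≤ ε ^ 2 / 2 := mul_le_of_le_one_left (by positivity) q1
  linarith

set_option maxHeartbeats 2000000 in
lemma upper {Ω₀ ε : ℝ} (hΩ : 0 < Ω₀) (hε : 0 < ε) (h1 : ε ≤ 1 / 40000) (h2 : ε ≤ Ω₀ / (2 * π)) :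
    ∃ Ψ, gpAdm Ψ ∧ ε ^ 2 * gpEnergy ε (Ω₀ / ε) Ψ ≤ tfGround Ω₀ +
      (π * Ω₀ ^ 4 / 16 + 128 * (320 * (2 + Ω₀ ^ 2 / 8) * Ω₀ + (2 + Ω₀ ^ 2 / 8) ^ 2) + π)
        * ε * |log ε| := by
  set Ω := Ω₀ / ε with hΩdef
  have hΩp : 0 < Ω := by positivity
  set ℓ := √(2 * π * ε / Ω₀) with hldef
  have hl : 0 < ℓ := sqrt_pos.2 (by positivity)
  have hl2 : ℓ ^ 2 = 2 * π * ε / Ω₀ := sq_sqrt (by positivity)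
  have hΩl : Ω * ℓ ^ 2 = 2 * π := by rw [hl2, hΩdef]; field_simp
  have hl1 : ℓ ≤ 1 := by
    rw [hldef, Real.sqrt_le_one, div_le_one hΩ]
    rw [le_div_iff₀ (by positivity)] at h2; linarith
  set N : ℤ := ⌊1 / ℓ⌋ + 1 with hNdef
  have hN : 1 / ℓ < N := by rw [hNdef]; push_cast; exact Int.lt_floor_add_one _
  have hVc := (VV_contDiff Ω ℓ N).continuous
  have hgV : ∀ x ∈ B1, ‖VV Ω ℓ N (x 0) (x 1)‖ ^ 2 = gg (x 0 / ℓ) (x 1 / ℓ) := by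
    intro x hx
    have hx1 := norm_sq_lt_one hx
    rw [normsq] at hx1
    have a1 : x 1 ^ 2 ≤ 1 := by nlinarith [sq_nonneg (x 0)]
    have b1 := abs_le.1 ((sq_le_one_iff_abs_le_one _).1 a1)
    apply VV_norm_sq hl hΩl
    · have : -(1 / ℓ) ≤ x 1 / ℓ := by rw [← neg_div]; gcongr; exact b1.1
      linarith
    · have : x 1 / ℓ ≤ 1 / ℓ := by gcongr; exact b1.2
      linarith
  have hG := disc_bound hε (by linarith) hl hl1
  have hGc : Continuous fun x : Pt => 1 / (gg (x 0 / ℓ) (x 1 / ℓ) + ε) := by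
    apply Continuous.div (by fun_prop) (by unfold gg; fun_prop)
    intro x; have := gg_nonneg (x 0 / ℓ) (x 1 / ℓ); positivity
  have hLog1 : 1 ≤ |log ε| := by
    have e1 : log ε ≤ log (1 / 4) := log_le_log hε (by linarith)
    have e : log (1 / 4 : ℝ) = -(2 * log 2) := by
      rw [one_div, log_inv, show (4 : ℝ) = 2 ^ 2 by norm_num, log_pow]; norm_num
    have := neg_le_abs (log ε)
    have := log_two_gt_d9
    linarith
  have hLog2 : 128 * (ε * |log ε|) ≤ π / 2 := by
    have hs : √ε ≤ 1 / 200 := by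
      rw [show (1 / 200 : ℝ) = √((1 / 200) ^ 2) by rw [sqrt_sq (by norm_num)]]
      apply sqrt_le_sqrt; linarith
    have hs0 := sqrt_pos.2 hε
    have hlt := abs_log_mul_self_lt (√ε) hs0 (by linarith)
    rw [abs_mul, abs_of_pos hs0, log_sqrt hε.le, abs_div, abs_two] at hlt
    have hsq : √ε * √ε = ε := mul_self_sqrt hε.le
    have : ε * |log ε| = 2 * √ε * (|log ε| / 2 * √ε) := by
      rw [← hsq]; rw [hsq]; linear_combination -(|log ε|) * hsq
    rw [this]
    have : 2 * √ε * (|log ε| / 2 * √ε) ≤ 2 * (1 / 200) * 1 := by gcongr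
    linarith [pi_gt_three]
  -- the core profile
  set q : Pt → ℝ := fun x => ‖VV Ω ℓ N (x 0) (x 1)‖ ^ 2 / (‖VV Ω ℓ N (x 0) (x 1)‖ ^ 2 + ε) with hq
  have hqc : Continuous q := by
    apply Continuous.div (by fun_prop) (by fun_prop)
    intro x; positivity
  have hq0 : ∀ x, 0 ≤ q x := fun x => by positivity
  have hq1 : ∀ x, q x ≤ 1 := fun x => by
    rw [hq]; simp only; rw [div_le_one (by positivity)]; linarith
  have hqe : ∀ x ∈ B1, 1 - q x = ε * (1 / (gg (x 0 / ℓ) (x 1 / ℓ) + ε)) := by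
    intro x hx
    simp only [hq]
    rw [hgV x hx]
    have := gg_nonneg (x 0 / ℓ) (x 1 / ℓ)
    field_simp; ring
  have hqi : ∫ x in B1, (1 - q x) ≤ π / 2 := by
    rw [setIntegral_congr_fun measB1 hqe, integral_const_mul]
    have := mul_le_mul_of_nonneg_left hG hε.le
    linarith
  obtain ⟨l, hlle, hmass⟩ := exists_mu (Ω₀ := Ω₀) hε (by linarith) hqc hq0 hq1 hqi
  set Ψ : Pt → ℂ := fun x => PP Ω₀ l ε Ω ℓ N (x 0) (x 1) with hΨ
  have hΨ2 : ∀ x, ‖Ψ x‖ ^ 2 = mm ε (TT Ω₀ l (x 0) (x 1)) * q x := fun x => PP_norm_sq hε _ _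
  have hΨc : ContDiff ℝ 1 Ψ := PP_contDiff Ω₀ l hε Ω ℓ N
  have hadm : gpAdm Ψ := gpAdm_of hΨc (by simp only [hΨ2]; exact hmass)
  refine ⟨Ψ, hadm, ?_⟩
  obtain ⟨-, i2, i3, i4, i5, i6⟩ := hadm
  set M := 2 + Ω₀ ^ 2 / 8 with hM
  have hMp : 0 < M := by positivity
  -- lower bound on the TF energy
  have htf : (∫ x in B1, -(max (TT Ω₀ l (x 0) (x 1)) 0) ^ 2) + l ≤ tfGround Ω₀ := by
    apply le_csInf
    · refine ⟨_, fun x => ‖Ψ x‖ ^ 2, ⟨i2, ?_, ae_of_all _ fun x => by positivity, i6⟩, rfl⟩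
      refine i4.congr (ae_of_all _ fun x => ?_)
      simp only; ring
    · rintro E ⟨ρ, hρ, rfl⟩
      exact tf_lower hρ
  set K := 320 * M * Ω₀ + M ^ 2 with hK
  have hKp : 0 < K := by positivity
  have j1 : IntegrableOn (fun x : Pt => -(max (TT Ω₀ l (x 0) (x 1)) 0) ^ 2) B1 :=
    integrableOn_of_cont (by unfold TT; fun_prop)
  have j2 : IntegrableOn (fun x : Pt => l * ‖Ψ x‖ ^ 2) B1 := i2.const_mul l
  have j3 : IntegrableOn (fun x : Pt => K * ε * (1 / (gg (x 0 / ℓ) (x 1 / ℓ) + ε))) B1 :=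
    (integrableOn_of_cont hGc).const_mul _
  have j4 : IntegrableOn (fun _ : Pt => ε * Ω₀ ^ 4 / 16 + ε ^ 2 / 2) B1 :=
    integrableOn_of_cont continuous_const
  have main : ε ^ 2 * gpEnergy ε Ω Ψ ≤ ∫ x in B1, ((-(max (TT Ω₀ l (x 0) (x 1)) 0) ^ 2
      + l * ‖Ψ x‖ ^ 2) + K * ε * (1 / (gg (x 0 / ℓ) (x 1 / ℓ) + ε))
      + (ε * Ω₀ ^ 4 / 16 + ε ^ 2 / 2)) := by
    unfold gpEnergy
    rw [← integral_const_mul]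
    refine setIntegral_mono_on ?_ (((j1.add j2).add j3).add j4) measB1 ?_
    · refine Integrable.const_mul ?_ _
      exact (i3.sub (i5.const_mul _)).add (i4.div_const _)
    intro x hx
    have hkin := kinetic (Ω₀ := Ω₀) (l := l) hε hΩp hl hΩl hx hN hΨ
    rw [gpDensity_eq]
    generalize ‖pd1 Ψ x + _‖ ^ 2 = A at *
    generalize ‖pd2 Ψ x - _‖ ^ 2 = B at *
    have hqx := hqe x hx
    have q0 := hq0 x
    have q1 := hq1 x
    have hx1 := norm_sq_lt_one hx
    have e4 : ‖Ψ x‖ ^ 4 = (‖Ψ x‖ ^ 2) ^ 2 := by ring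
    have hT : TT Ω₀ l (x 0) (x 1) ≤ 1 + Ω₀ ^ 2 / 8 := by
      have : 4 / π ≤ 4 / 2 := by gcongr; exact two_le_pi
      rw [normsq] at hx1
      unfold TT; nlinarith [sq_nonneg Ω₀]
    have hVx : Ω₀ ^ 2 * ‖x‖ ^ 2 / 4 = 2 * TT Ω₀ l (x 0) (x 1) - l := by
      rw [normsq]; unfold TT; ring
    rw [e4, hΨ2]
    have hm := mm_pos hε (TT Ω₀ l (x 0) (x 1))
    have hmM : mm ε (TT Ω₀ l (x 0) (x 1)) ≤ M := by
      have := mm_le hε (by positivity) hT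
      rw [hM]; linarith
    have hen := mm_energy hε (TT Ω₀ l (x 0) (x 1))
    have hmax : max (TT Ω₀ l (x 0) (x 1)) 0 ^ 2 ≤ M ^ 2 := by
      apply pow_le_pow_left₀ (le_max_right _ _)
      apply max_le _ hMp.le
      rw [hM]; linarith
    have hGp : 0 < gg (x 0 / ℓ) (x 1 / ℓ) + ε := by
      have := gg_nonneg (x 0 / ℓ) (x 1 / ℓ); linarith
    generalize mm ε (TT Ω₀ l (x 0) (x 1)) = m at *
    generalize TT Ω₀ l (x 0) (x 1) = t at *
    generalize gg (x 0 / ℓ) (x 1 / ℓ) + ε = G at *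
    generalize q x = Q at *
    -- kinetic part
    have k1 : ε ^ 2 * (A + B) ≤ ε * Ω₀ ^ 4 / 16 + 320 * M * Ω₀ * ε * (1 / G) := by
      calc _ ≤ ε ^ 2 * (Ω₀ ^ 4 / (16 * ε) + 320 * M * Ω / G) := by
            refine mul_le_mul_of_nonneg_left (hkin.trans ?_) (sq_nonneg ε)
            gcongr
        _ = _ := by rw [hΩdef]; field_simp
    -- potential part
    have k2 : (m * Q) ^ 2 - 2 * t * (m * Q) ≤ -(max t 0) ^ 2 + ε ^ 2 / 2 + M ^ 2 * (1 - Q) :=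
      pot_bound q0 q1 hmax hen
    have e1 : ε ^ 2 * (A + B - Ω ^ 2 * ‖x‖ ^ 2 / 4 * (m * Q) + (m * Q) ^ 2 / ε ^ 2)
        = ε ^ 2 * (A + B) - (2 * t - l) * (m * Q) + (m * Q) ^ 2 := by
      rw [← hVx, hΩdef]; field_simp
    rw [e1]
    rw [hqx] at k2
    rw [hK]
    linarith
  have hsum : ∫ x in B1, ((-(max (TT Ω₀ l (x 0) (x 1)) 0) ^ 2
      + l * ‖Ψ x‖ ^ 2) + K * ε * (1 / (gg (x 0 / ℓ) (x 1 / ℓ) + ε))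
      + (ε * Ω₀ ^ 4 / 16 + ε ^ 2 / 2)) =
      (∫ x in B1, -(max (TT Ω₀ l (x 0) (x 1)) 0) ^ 2) + l
      + K * ε * (∫ x in B1, 1 / (gg (x 0 / ℓ) (x 1 / ℓ) + ε))
      + π * (ε * Ω₀ ^ 4 / 16 + ε ^ 2 / 2) := by
    rw [int_four j1 j2 j3 j4, integral_const_mul, integral_const_mul, i6, const_int, mul_one]
  rw [hsum] at main
  have f1 : K * ε * (∫ x in B1, 1 / (gg (x 0 / ℓ) (x 1 / ℓ) + ε)) ≤ K * ε * (128 * |log ε|) := by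
    gcongr
  have f2 : π * (ε * Ω₀ ^ 4 / 16 + ε ^ 2 / 2) ≤ (π * Ω₀ ^ 4 / 16 + π) * ε * |log ε| := by
    calc _ ≤ (π * Ω₀ ^ 4 / 16 + π) * ε * 1 := by nlinarith [pi_pos, mul_pos pi_pos hε]
      _ ≤ _ := by gcongr
  linarith

theorem stmt8 (Ω₀ : ℝ) (hΩ : 0 < Ω₀) :
    ∃ (C ε₀ : ℝ), 0 < ε₀ ∧ ∀ ε : ℝ, 0 < ε → ε < ε₀ →
      tfGround Ω₀ ≤ ε ^ 2 * gpGround ε (Ω₀ / ε) ∧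
      ε ^ 2 * gpGround ε (Ω₀ / ε) ≤ tfGround Ω₀ + C * ε * |Real.log ε| := by
  refine ⟨π * Ω₀ ^ 4 / 16 + 128 * (320 * (2 + Ω₀ ^ 2 / 8) * Ω₀ + (2 + Ω₀ ^ 2 / 8) ^ 2) + π,
    min (1 / 40000) (Ω₀ / (2 * π)), by positivity, ?_⟩
  intro ε hε hlt
  obtain ⟨Ψ, hadm, hle⟩ := upper hΩ hε (hlt.le.trans (min_le_left _ _))
    (hlt.le.trans (min_le_right _ _))
  have hε2 : 0 < ε ^ 2 := by positivity
  have hlow : ∀ E ∈ {E | ∃ Ψ : Pt → ℂ, gpAdm Ψ ∧ E = gpEnergy ε (Ω₀ / ε) Ψ},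
      tfGround Ω₀ / ε ^ 2 ≤ E := by
    rintro E ⟨Φ, hΦ, rfl⟩
    rw [div_le_iff₀ hε2, mul_comm]
    exact gp_ge_tf hε hΦ
  constructor
  · have : tfGround Ω₀ / ε ^ 2 ≤ gpGround ε (Ω₀ / ε) := le_csInf ⟨_, Ψ, hadm, rfl⟩ hlow
    rwa [div_le_iff₀ hε2, mul_comm] at this
  · refine le_trans ?_ hle
    have : gpGround ε (Ω₀ / ε) ≤ gpEnergy ε (Ω₀ / ε) Ψ := csInf_le ⟨_, hlow⟩ ⟨Ψ, hadm, rfl⟩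
    exact mul_le_mul_of_nonneg_left this hε2.le
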